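/- Let $R_1$ be a commutative local ring with unity having five distinct units $u_1, \ldots, u_5$ and four distinct non-zero elements $a_1, a_2, a_3, a_4$ of its maximal ideal. Then $\Gamma'(R_1 \times \mathbb{Z}_2)$ contains $K_{5,5}$ as a subgraph, with parts $\{(u_1,0), (u_2,0), (u_3,0), (u_4,0), (u_5,0)\}$ and $\{(0,1), (a_1,1), (a_2,1), (a_3,1), (a_4,1)\}$. -/

import Mathlib

/-- Adjacency in the cozero-divisor graph `Γ'(R)`: both elements are vertices
(non-zero non-units) and neither lies in the principal ideal generated by the
other. -/
def cozeroAdj {R : Type*} [CommRing R] (x y : R) : Prop :=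
  (x ≠ 0 ∧ ¬ IsUnit x) ∧ (y ≠ 0 ∧ ¬ IsUnit y) ∧
    x ∉ Ideal.span {y} ∧ y ∉ Ideal.span {x}

/-!
The two parts separate under the projections: each `(u, 0)` is a unit in the first coordinate only,
and each `(b, 1)` with `b` a non-unit is a unit in the second coordinate only. A divisor of a unit
is a unit, so neither element can be a multiple of the other.
-/

section Adjacency

variable {R S T : Type*} [CommRing R] [CommRing S] [CommRing T] {x y : R}

theorem cozeroAdj_iff_notMem_span :
    cozeroAdj x y ↔ x ∉ Ideal.span {y} ∧ y ∉ Ideal.span {x} := by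
  have vertex_of_notMem {x y : R} (hxy : x ∉ Ideal.span {y}) (hyx : y ∉ Ideal.span {x}) :
      x ≠ 0 ∧ ¬ IsUnit x := by
    refine ⟨fun hx => hxy (hx ▸ zero_mem _), fun hx => hyx ?_⟩
    exact Ideal.span_singleton_eq_top.2 hx ▸ Submodule.mem_top
  exact ⟨fun h => h.2.2, fun ⟨hxy, hyx⟩ =>
    ⟨vertex_of_notMem hxy hyx, vertex_of_notMem hyx hxy, hxy, hyx⟩⟩

theorem cozeroAdj.ne (h : cozeroAdj x y) : x ≠ y := by
  rintro rfl
  exact h.2.2.1 (Ideal.mem_span_singleton_self x)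

theorem notMem_span_singleton_of_isUnit_map (f : R →+* S) (hx : IsUnit (f x))
    (hy : ¬ IsUnit (f y)) : x ∉ Ideal.span {y} := fun hxy =>
  hy (isUnit_of_dvd_unit (map_dvd f (Ideal.mem_span_singleton.1 hxy)) hx)

theorem cozeroAdj_of_isUnit_map (f : R →+* S) (g : R →+* T)
    (hfx : IsUnit (f x)) (hfy : ¬ IsUnit (f y)) (hgx : ¬ IsUnit (g x)) (hgy : IsUnit (g y)) :
    cozeroAdj x y :=
  cozeroAdj_iff_notMem_span.2
    ⟨notMem_span_singleton_of_isUnit_map f hfx hfy, notMem_span_singleton_of_isUnit_map g hgy hgx⟩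

end Adjacency

theorem stmt10_general {R S ι κ : Type*} [CommRing R] [CommRing S] [Nontrivial S]
    {u : ι → R} (hu : Function.Injective u) (huu : ∀ i, IsUnit (u i))
    {b : κ → R} (hb : Function.Injective b) (hbu : ∀ j, ¬ IsUnit (b j))
    {A : ι → R × S} {B : κ → R × S} (hA : A = fun i => (u i, 0)) (hB : B = fun j => (b j, 1)) :
    Function.Injective A ∧ Function.Injective B ∧ (∀ i j, A i ≠ B j) ∧
      ∀ i j, cozeroAdj (A i) (B j) := by
  subst hA hB
  have adj (i : ι) (j : κ) : cozeroAdj (u i, (0 : S)) (b j, 1) :=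
    cozeroAdj_of_isUnit_map (RingHom.fst R S) (RingHom.snd R S) (huu i) (hbu j)
      not_isUnit_zero isUnit_one
  exact ⟨fun _ _ h => hu (congrArg Prod.fst h), fun _ _ h => hb (congrArg Prod.fst h),
    fun i j => (adj i j).ne, adj⟩

/-- Let `R₁` be a commutative local ring with five distinct units `u₁, …, u₅`
and four distinct non-zero elements `a₁, …, a₄` of its maximal ideal.  Then
`Γ'(R₁ × ℤ₂)` contains `K_{5,5}` as a subgraph with the indicated parts. -/
theorem stmt10 (R₁ : Type*) [CommRing R₁] [IsLocalRing R₁]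
    (u : Fin 5 → R₁) (hu : Function.Injective u) (huu : ∀ i, IsUnit (u i))
    (a : Fin 4 → R₁) (ha : Function.Injective a)
    (ham : ∀ i, a i ∈ IsLocalRing.maximalIdeal R₁) (ha0 : ∀ i, a i ≠ 0)
    (A B : Fin 5 → R₁ × ZMod 2)
    (hA : A = fun i => (u i, 0))
    (hB : B = ![(0, 1), (a 0, 1), (a 1, 1), (a 2, 1), (a 3, 1)]) :
    Function.Injective A ∧ Function.Injective B ∧ (∀ i j, A i ≠ B j) ∧
      ∀ i j, cozeroAdj (A i) (B j) := by
  have cons_injective : Function.Injective (Fin.cons 0 a : Fin 5 → R₁) :=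
    Fin.cons_injective_iff.2 ⟨fun ⟨i, hi⟩ => ha0 i hi, ha⟩
  have cons_not_isUnit : ∀ j, ¬ IsUnit ((Fin.cons 0 a : Fin 5 → R₁) j) :=
    Fin.cases not_isUnit_zero ham
  exact stmt10_general hu huu cons_injective cons_not_isUnit hA
    (hB.trans (by ext1 j; fin_cases j <;> rfl))
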